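/- arXiv:math/0303285 — 2 statements merged into one kernel-verified Lean document; each statement's English description precedes it below -/
import Mathlib

section
/- The functor i_* : D^b(B-Mod) → D^b(A-Mod) between bounded derived categories induced by restriction of scalars along the quotient map A → B is fully faithful, admits a right adjoint i^! (given by RHom_A(B, −)), and the composite i^! ∘ i_* is naturally isomorphic to the identity functor of D^b(B-Mod). -/
universe u

open CategoryTheory Abelian

noncomputable instance moduleCatHasDerivedCategory (R : Type u) [Ring R] :
    HasDerivedCategory (ModuleCat.{u} R) :=
  HasDerivedCategory.standard _

section RestrictScalars

variable {R₁ R₂ : Type u} [Ring R₁] [Ring R₂] (f : R₁ →+* R₂)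

instance : (ModuleCat.restrictScalars.{u} f).Additive := ⟨rfl⟩

noncomputable instance : Limits.PreservesFiniteLimits (ModuleCat.restrictScalars.{u} f) :=
  ⟨fun _ _ _ => ⟨fun {F} => ModuleCat.preservesLimit_restrictScalars f F⟩⟩

noncomputable instance : Limits.PreservesFiniteColimits (ModuleCat.restrictScalars.{u} f) :=
  ⟨fun _ _ _ => ⟨fun {F} => ModuleCat.preservesColimit_restrictScalars f F⟩⟩

end RestrictScalars
/-- A cochain complex is bounded if its components vanish outside a finite
range of degrees. -/
def IsBoundedComplex {C : Type*} [Category C] [Limits.HasZeroMorphisms C]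
    (K : CochainComplex C ℤ) : Prop :=
  ∃ a b : ℤ, ∀ i : ℤ, (i < a ∨ b < i) → Limits.IsZero (K.X i)

/-- The bounded derived category `D^b(C)`, realized as the full subcategory of
the derived category of `C` consisting of objects which are isomorphic to the
image of a bounded complex. -/
def BoundedDerivedCategory (C : Type*) [Category C] [Abelian C]
    [HasDerivedCategory C] :=
  ObjectProperty.FullSubcategory (fun Z : DerivedCategory C =>
    ∃ K : CochainComplex C ℤ, IsBoundedComplex K ∧ Nonempty (Z ≅ DerivedCategory.Q.obj K))

noncomputable instance (C : Type*) [Category C] [Abelian C] [HasDerivedCategory C] :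
    Category (BoundedDerivedCategory C) :=
  inferInstanceAs (Category (ObjectProperty.FullSubcategory _))

/-- The inclusion `D^b(C) ⥤ D(C)`. -/
noncomputable def boundedInclusion (C : Type*) [Category C] [Abelian C]
    [HasDerivedCategory C] : BoundedDerivedCategory C ⥤ DerivedCategory C :=
  ObjectProperty.ι _

/-- The quotient ring `B = A / I`. -/
def QuotByIdeal (A : Type u) [Ring A] (I : Ideal A) : Type u :=
  RingQuot (fun a b : A => a ∈ I ∧ b = 0)

noncomputable instance (A : Type u) [Ring A] (I : Ideal A) : Ring (QuotByIdeal A I) :=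
  inferInstanceAs (Ring (RingQuot _))

/-- The quotient map `A → B = A / I`. -/
noncomputable def quotByIdealProj (A : Type u) [Ring A] (I : Ideal A) :
    A →+* QuotByIdeal A I :=
  RingQuot.mkRingHom _

/-!
For an injective `A`-module `J`, applying `Hom_A(-, J)` to `0 → I → A → B → 0` gives an exact
sequence `0 → Hom_A(B, J) → J → Hom_A(I, J) → 0` whose first map is the counit of the adjunction
between restriction and coextension of scalars. The functor `Hom_A(I, -)` is exact because `I` is
projective, and it vanishes on `B`-modules because `I = I²`.

Let `J` be an injective resolution of a bounded complex of `A`-modules. The cohomology of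
`Hom_A(I, J)` is bounded, hence so is that of `Hom_A(B, J)`: the right adjoint `RHom_A(B, -)`
preserves bounded objects. If `J` resolves a complex of `B`-modules, then `Hom_A(I, J)` is acyclic
and the counit `Hom_A(B, J) → J` is a quasi-isomorphism, which is full faithfulness.
-/

section CouniversalArrow

variable {C D : Type*} [Category* C] [Category* D] {Φ : C ⥤ D}

/-- An arrow `ε : Φ.obj Z ⟶ Y` is couniversal if every arrow `Φ.obj X ⟶ Y` factors uniquely
through it: it is then the counit at `Y` of a (partially defined) right adjoint of `Φ`. -/
def IsCouniversalArrow (Φ : C ⥤ D) {Z : C} {Y : D} (ε : Φ.obj Z ⟶ Y) : Prop :=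
  ∀ X : C, Function.Bijective fun f : X ⟶ Z => Φ.map f ≫ ε

namespace IsCouniversalArrow

variable {Z : C} {Y : D} {ε : Φ.obj Z ⟶ Y}

lemma comp_iso (hε : IsCouniversalArrow Φ ε) {Y' : D} (e : Y ≅ Y') :
    IsCouniversalArrow Φ (ε ≫ e.hom) := fun X => by
  simpa only [Function.comp_def, Iso.homCongr_apply, Iso.refl_inv, Category.id_comp,
    Category.assoc] using ((Iso.refl (Φ.obj X)).homCongr e).bijective.comp (hε X)

lemma rightAdjointObjIsDefined (hε : IsCouniversalArrow Φ ε) : Φ.rightAdjointObjIsDefined Y := by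
  rw [Functor.rightAdjointObjIsDefined_iff]
  exact Functor.RepresentableBy.isRepresentable
    { homEquiv := fun {X} => Equiv.ofBijective _ (hε X)
      homEquiv_comp := fun f g => by simp }

lemma map_bijective [Φ.ReflectsIsomorphisms] {X' : C} {ε : Φ.obj Z ⟶ Φ.obj X'}
    (hε : IsCouniversalArrow Φ ε) [IsIso ε] (X : C) :
    Function.Bijective (Φ.map : (X ⟶ X') → (Φ.obj X ⟶ Φ.obj X')) := by
  obtain ⟨u, hu⟩ := (hε X').surjective (𝟙 _)
  have hu' : Φ.map u = inv ε := IsIso.eq_inv_of_inv_hom_id hu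
  have : IsIso (Φ.map u) := hu' ▸ inferInstance
  have : IsIso u := isIso_of_reflects_iso u Φ
  have map_eq (f : X ⟶ X') : Φ.map f = Φ.map (f ≫ u) ≫ ε := by simp [hu']
  simpa only [Function.comp_def, Iso.homCongr_apply, Iso.refl_inv, Category.id_comp, asIso_hom,
    ← map_eq] using (hε X).comp ((Iso.refl X).homCongr (asIso u)).bijective

lemma preimage {C' D' : Type*} [Category* C'] [Category* D'] {Ψ : C' ⥤ D'}
    {ι : C' ⥤ C} [ι.Full] [ι.Faithful] {ι' : D' ⥤ D} [ι'.Full] [ι'.Faithful]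
    (e : Ψ ⋙ ι' ≅ ι ⋙ Φ) {Z : C'} {Y : D'} {ε : Φ.obj (ι.obj Z) ⟶ ι'.obj Y}
    (hε : IsCouniversalArrow Φ ε) :
    IsCouniversalArrow Ψ (ι'.preimage (e.hom.app Z ≫ ε)) := fun X => by
  have map_eq : ι'.map ∘ (fun f : X ⟶ Z => Ψ.map f ≫ ι'.preimage (e.hom.app Z ≫ ε)) =
      (e.app X).symm.homFromEquiv ∘ (fun g => Φ.map g ≫ ε) ∘ ι.map := by
    ext f
    simpa using e.hom.naturality_assoc f ε
  rw [← Function.Bijective.of_comp_iff'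
    ((Functor.FullyFaithful.ofFullyFaithful ι').map_bijective _ _), map_eq]
  exact (Equiv.bijective _).comp <| (hε _).comp <|
    (Functor.FullyFaithful.ofFullyFaithful ι).map_bijective _ _

end IsCouniversalArrow

lemma isCouniversalArrow_of_essSurj {E : Type*} [Category* E] (L : E ⥤ C) [L.EssSurj]
    {Z : C} {Y : D} {ε : Φ.obj Z ⟶ Y}
    (hε : ∀ X : E, Function.Bijective fun f : L.obj X ⟶ Z => Φ.map f ≫ ε) :
    IsCouniversalArrow Φ ε := fun X => by
  let e := L.objObjPreimageIso X
  have map_eq : (fun f : X ⟶ Z => Φ.map f ≫ ε) = (Φ.mapIso e).homFromEquiv ∘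
      (fun f : L.obj (L.objPreimage X) ⟶ Z => Φ.map f ≫ ε) ∘ e.symm.homFromEquiv := by
    ext f
    simp only [Function.comp_apply, Iso.homFromEquiv_apply, Functor.mapIso_inv, Iso.symm_inv,
      Functor.map_comp, Category.assoc, Iso.map_inv_hom_id_assoc]
  rw [map_eq]
  exact (Equiv.bijective _).comp ((hε _).comp (Equiv.bijective _))

lemma isLeftAdjoint_of_exists_isCouniversalArrow
    (h : ∀ Y : D, ∃ (Z : C) (ε : Φ.obj Z ⟶ Y), IsCouniversalArrow Φ ε) : Φ.IsLeftAdjoint := by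
  refine Functor.isLeftAdjoint_of_rightAdjointObjIsDefined_eq_top ?_
  ext Y
  obtain ⟨Z, ε, hε⟩ := h Y
  simpa using hε.rightAdjointObjIsDefined

end CouniversalArrow

section ComplexAdjunction

variable {C D ι : Type*} [Category* C] [Category* D] [Preadditive C] [Preadditive D]
  {G : C ⥤ D} {F : D ⥤ C} [G.Additive] [F.Additive] (adj : G ⊣ F) (c : ComplexShape ι)

/-- The degreewise adjunction between categories of complexes induced by an adjunction between
additive functors. -/
def mapHomologicalComplexAdjunction : G.mapHomologicalComplex c ⊣ F.mapHomologicalComplex c where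
  unit :=
    { app := fun K =>
        { f := fun i => adj.unit.app (K.X i)
          comm' := fun _ _ _ => (adj.unit.naturality _).symm }
      naturality := fun _ _ f => by ext i; exact adj.unit.naturality (f.f i) }
  counit :=
    { app := fun K =>
        { f := fun i => adj.counit.app (K.X i)
          comm' := fun _ _ _ => (adj.counit.naturality _).symm }
      naturality := fun _ _ f => by ext i; exact adj.counit.naturality (f.f i) }
  left_triangle_components K := by ext i; exact adj.left_triangle_components (K.X i)
  right_triangle_components K := by ext i; exact adj.right_triangle_components (K.X i)

variable {c}

/-- Adjoint transposition of homotopies. -/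
def homotopyHomEquiv {K : HomologicalComplex C c} {L : HomologicalComplex D c}
    {γ δ : (G.mapHomologicalComplex c).obj K ⟶ L} (h : Homotopy γ δ) :
    Homotopy ((mapHomologicalComplexAdjunction adj c).homEquiv K L γ)
      ((mapHomologicalComplexAdjunction adj c).homEquiv K L δ) :=
  (F.mapHomotopy h).compLeft ((mapHomologicalComplexAdjunction adj c).unit.app K)

end ComplexAdjunction

section DerivedCounit

open Limits DerivedCategory

section

variable {C : Type*} [Category* C] [Abelian C] [HasDerivedCategory C]
  {K L : CochainComplex C ℤ} [L.IsKInjective]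

lemma Q_map_surjective_of_isKInjective : Function.Surjective (Q.map : (K ⟶ L) → _) := fun f => by
  obtain ⟨g, hg⟩ := (CochainComplex.IsKInjective.Qh_map_bijective
    ((HomotopyCategory.quotient _ _).obj K) L).surjective
    ((quotientCompQhIso C).hom.app K ≫ f ≫ (quotientCompQhIso C).inv.app L)
  obtain ⟨φ, rfl⟩ := (HomotopyCategory.quotient _ _).map_surjective g
  refine ⟨φ, ?_⟩
  rw [← cancel_epi ((quotientCompQhIso C).hom.app K), ← quotientCompQhIso_hom_naturality, hg]
  simp

lemma nonempty_homotopy_of_Q_map_eq {φ ψ : K ⟶ L}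
    (h : Q.map φ = Q.map ψ) : Nonempty (Homotopy φ ψ) := by
  refine ⟨HomotopyCategory.homotopyOfEq _ _ ?_⟩
  apply (CochainComplex.IsKInjective.Qh_map_bijective _ L).injective
  rw [← cancel_mono ((quotientCompQhIso C).hom.app L), quotientCompQhIso_hom_naturality,
    quotientCompQhIso_hom_naturality, h]

end

variable {C D : Type*} [Category* C] [Category* D] [Abelian C] [Abelian D]
  {G : C ⥤ D} [G.Additive] [PreservesFiniteLimits G] [PreservesFiniteColimits G]

instance mapArrow_Q_essSurj [HasDerivedCategory C] : (Q : _ ⥤ DerivedCategory C).mapArrow.EssSurj :=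
  have : (HomotopyCategory.quotient C (.up ℤ) ⋙ Qh).mapArrow.EssSurj :=
    Functor.essSurj_comp (HomotopyCategory.quotient C (.up ℤ)).mapArrow Qh.mapArrow
  @Functor.essSurj_of_iso _ _ _ _ _ _ this
    ((Functor.mapArrowFunctor _ _).mapIso (quotientCompQhIso C))

lemma acyclic_mapHomologicalComplex_obj {ι : Type*} {c : ComplexShape ι}
    {K : HomologicalComplex C c} (hK : K.Acyclic) :
    ((G.mapHomologicalComplex c).obj K).Acyclic :=
  fun i => (hK i).map G

lemma isKInjective_mapHomologicalComplex_obj {F : D ⥤ C} [F.Additive] (adj : G ⊣ F)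
    (J : CochainComplex D ℤ) [J.IsKInjective] :
    CochainComplex.IsKInjective ((F.mapHomologicalComplex _).obj J) where
  nonempty_homotopy_zero {K} φ hK := by
    let e := (mapHomologicalComplexAdjunction adj (.up ℤ)).homEquiv K J
    have h : Homotopy (e.symm φ) 0 :=
      CochainComplex.IsKInjective.homotopyZero _ (acyclic_mapHomologicalComplex_obj hK)
    have h₀ : e 0 = 0 := by simp [e, Adjunction.homEquiv_unit]
    exact ⟨(Homotopy.ofEq (e.apply_symm_apply φ).symm).trans
      ((homotopyHomEquiv adj h).trans (.ofEq h₀))⟩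

variable [HasDerivedCategory C] [HasDerivedCategory D]

lemma isIso_mapDerivedCategory_map_Q_map_iff [G.ReflectsIsomorphisms] {K L : CochainComplex C ℤ}
    (φ : K ⟶ L) : IsIso (G.mapDerivedCategory.map (Q.map φ)) ↔ IsIso (Q.map φ) := by
  rw [← Functor.comp_map, NatIso.isIso_map_iff G.mapDerivedCategoryFactors φ, Functor.comp_map,
    isIso_Q_map_iff_quasiIso, isIso_Q_map_iff_quasiIso,
    HomologicalComplex.quasiIso_map_iff_of_preservesHomology]

instance [G.ReflectsIsomorphisms] : G.mapDerivedCategory.ReflectsIsomorphisms where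
  reflects f hf := by
    have e := Q.mapArrow.objObjPreimageIso (Arrow.mk f)
    exact ((MorphismProperty.isomorphisms _).arrow_mk_iso_iff e).1
      ((isIso_mapDerivedCategory_map_Q_map_iff _).1
        (((MorphismProperty.isomorphisms _).arrow_mk_iso_iff
          (G.mapDerivedCategory.mapArrow.mapIso e)).2 hf))

variable {F : D ⥤ C} [F.Additive] (adj : G ⊣ F) (J : CochainComplex D ℤ)

/-- The morphism `G (F J) ⟶ J` in the derived category of `D` induced by the counit of an
adjunction `G ⊣ F` with `G` exact. -/
noncomputable def derivedCounit :
    G.mapDerivedCategory.obj (Q.obj ((F.mapHomologicalComplex _).obj J)) ⟶ Q.obj J :=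
  G.mapDerivedCategoryFactors.hom.app _ ≫
    Q.map ((mapHomologicalComplexAdjunction adj _).counit.app J)

lemma isIso_derivedCounit
    [QuasiIso ((mapHomologicalComplexAdjunction adj (.up ℤ)).counit.app J)] :
    IsIso (derivedCounit adj J) := by
  unfold derivedCounit; infer_instance

lemma map_Q_map_comp_derivedCounit {K : CochainComplex C ℤ}
    (φ : K ⟶ (F.mapHomologicalComplex _).obj J) :
    G.mapDerivedCategory.map (Q.map φ) ≫ derivedCounit adj J =
      G.mapDerivedCategoryFactors.hom.app K ≫
        Q.map (((mapHomologicalComplexAdjunction adj _).homEquiv K J).symm φ) := by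
  rw [derivedCounit, Functor.mapDerivedCategoryFactors_hom_naturality_assoc,
    Adjunction.homEquiv_counit, Functor.map_comp]

lemma isCouniversalArrow_derivedCounit [J.IsKInjective] :
    IsCouniversalArrow G.mapDerivedCategory (derivedCounit adj J) := by
  have := isKInjective_mapHomologicalComplex_obj adj J
  refine isCouniversalArrow_of_essSurj Q fun K => ⟨fun f₁ f₂ h => ?_, fun g => ?_⟩
  · obtain ⟨φ₁, rfl⟩ := Q_map_surjective_of_isKInjective f₁
    obtain ⟨φ₂, rfl⟩ := Q_map_surjective_of_isKInjective f₂
    simp only [map_Q_map_comp_derivedCounit, cancel_epi] at h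
    obtain ⟨h⟩ := nonempty_homotopy_of_Q_map_eq h
    simpa using Q_map_eq_of_homotopy C (homotopyHomEquiv adj h)
  · obtain ⟨γ, hγ⟩ := Q_map_surjective_of_isKInjective
      (G.mapDerivedCategoryFactors.inv.app K ≫ g)
    refine ⟨Q.map ((mapHomologicalComplexAdjunction adj _).homEquiv K J γ), ?_⟩
    simp [map_Q_map_comp_derivedCounit, hγ]

end DerivedCounit

section BoundedDerivedCategory

open Limits DerivedCategory

section

variable (C : Type*) [Category* C] [Abelian C] [HasDerivedCategory C]

/-- The objects of the derived category represented by bounded complexes, i.e. those of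
`BoundedDerivedCategory C`. -/
abbrev boundedObjects : ObjectProperty (DerivedCategory C) :=
  fun Z => ∃ K : CochainComplex C ℤ, IsBoundedComplex K ∧ Nonempty (Z ≅ Q.obj K)

instance : (boundedInclusion C).Full := inferInstanceAs (boundedObjects C).ι.Full

instance : (boundedInclusion C).Faithful := inferInstanceAs (boundedObjects C).ι.Faithful

variable {C}

lemma boundedObjects_Q_obj (K : CochainComplex C ℤ) (a b : ℤ) [K.IsGE a] [K.IsLE b] :
    boundedObjects C (Q.obj K) := by
  have : (Q.obj K).IsGE a := by rwa [isGE_Q_obj_iff]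
  have : (Q.obj K).IsLE b := by rwa [isLE_Q_obj_iff]
  obtain ⟨L, hLa, hLb, e⟩ := exists_iso_Q_obj_of_isGE_of_isLE (Q.obj K) a b
  rw [CochainComplex.isStrictlyGE_iff] at hLa
  rw [CochainComplex.isStrictlyLE_iff] at hLb
  exact ⟨L, ⟨a, b, fun i hi => hi.elim (fun h => hLa i h) (hLb i)⟩, e⟩

end

lemma IsBoundedComplex.mapHomologicalComplex_obj {C D : Type*} [Category* C] [Category* D]
    [Preadditive C] [Preadditive D] {K : CochainComplex C ℤ} (hK : IsBoundedComplex K)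
    (G : C ⥤ D) [G.Additive] : IsBoundedComplex ((G.mapHomologicalComplex _).obj K) := by
  obtain ⟨a, b, h⟩ := hK
  exact ⟨a, b, fun i hi => G.map_isZero (h i hi)⟩

section

variable {D : Type*} [Category* D] [Abelian D]

/-- A bounded below complex of injective objects with bounded above cohomology, i.e. the kind of
complex that arises as an injective resolution of a bounded complex. -/
structure IsBoundedInjectiveModel (J : CochainComplex D ℤ) : Prop where
  injective (n : ℤ) : Injective (J.X n)
  exists_isStrictlyGE : ∃ a, J.IsStrictlyGE a
  exists_isLE : ∃ b, J.IsLE b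

lemma IsBoundedInjectiveModel.isKInjective {J : CochainComplex D ℤ}
    (hJ : IsBoundedInjectiveModel J) : J.IsKInjective := by
  obtain ⟨a, _⟩ := hJ.exists_isStrictlyGE
  have := hJ.injective
  exact CochainComplex.isKInjective_of_injective J a

lemma IsBoundedComplex.exists_quasiIso_isBoundedInjectiveModel [EnoughInjectives D]
    {K : CochainComplex D ℤ} (hK : IsBoundedComplex K) :
    ∃ (J : CochainComplex D ℤ) (i : K ⟶ J), QuasiIso i ∧ IsBoundedInjectiveModel J := by
  obtain ⟨a, b, h⟩ := hK
  have : K.IsStrictlyGE a := (CochainComplex.isStrictlyGE_iff _ _).2 fun i hi => h i (.inl hi)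
  have : K.IsStrictlyLE b := (CochainComplex.isStrictlyLE_iff _ _).2 fun i hi => h i (.inr hi)
  obtain ⟨J, i, hi, hJ, hJa⟩ :=
    CochainComplex.Plus.modelCategoryQuillen.exists_quasiIso_injective K a
  have : J.IsLE b := (CochainComplex.isLE_iff _ _).2 fun n hn =>
    (exactAt_iff_of_quasiIsoAt i n).1 (K.exactAt_of_isLE b n hn)
  exact ⟨J, i, hi, hJ, ⟨a, hJa⟩, ⟨b, this⟩⟩

end

variable {C D : Type*} [Category* C] [Category* D] [Abelian C] [Abelian D]
  [HasDerivedCategory C] [HasDerivedCategory D]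
  (G : C ⥤ D) [G.Additive] [PreservesFiniteLimits G] [PreservesFiniteColimits G]

/-- The functor between bounded derived categories induced by an exact functor. -/
noncomputable def mapBoundedDerivedCategory :
    BoundedDerivedCategory C ⥤ BoundedDerivedCategory D :=
  ObjectProperty.lift (boundedObjects D) (boundedInclusion C ⋙ G.mapDerivedCategory) fun X => by
    obtain ⟨K, hK, ⟨e⟩⟩ := X.property
    exact ⟨_, hK.mapHomologicalComplex_obj G,
      ⟨G.mapDerivedCategory.mapIso e ≪≫ G.mapDerivedCategoryFactors.app K⟩⟩

/-- The functor induced on bounded derived categories is a restriction of the one induced on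
derived categories. -/
noncomputable def mapBoundedDerivedCategoryCompInclusionIso :
    mapBoundedDerivedCategory G ⋙ boundedInclusion D ≅
      boundedInclusion C ⋙ G.mapDerivedCategory :=
  ObjectProperty.liftCompιIso _ _ _

variable {G} {F : D ⥤ C} [F.Additive] [EnoughInjectives D]

lemma mapBoundedDerivedCategory_isLeftAdjoint (adj : G ⊣ F)
    (hF : ∀ J : CochainComplex D ℤ, IsBoundedInjectiveModel J →
      ∃ b, CochainComplex.IsLE ((F.mapHomologicalComplex _).obj J) b) :
    (mapBoundedDerivedCategory G).IsLeftAdjoint := by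
  refine isLeftAdjoint_of_exists_isCouniversalArrow fun Y => ?_
  obtain ⟨K, hK, ⟨e⟩⟩ := Y.property
  obtain ⟨J, i, hi, hJ⟩ := hK.exists_quasiIso_isBoundedInjectiveModel
  obtain ⟨a, _⟩ := hJ.exists_isStrictlyGE
  obtain ⟨b, _⟩ := hF J hJ
  have : CochainComplex.IsStrictlyGE ((F.mapHomologicalComplex _).obj J) a :=
    (CochainComplex.isStrictlyGE_iff _ _).2 fun i hi =>
      F.map_isZero (J.isZero_of_isStrictlyGE a i hi)
  have := hJ.isKInjective
  let Z : BoundedDerivedCategory C :=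
    ⟨Q.obj ((F.mapHomologicalComplex _).obj J), boundedObjects_Q_obj _ a b⟩
  have hε := (isCouniversalArrow_derivedCounit adj J).comp_iso ((asIso (Q.map i)).symm ≪≫ e.symm)
  exact ⟨Z, _, .preimage (mapBoundedDerivedCategoryCompInclusionIso G) (Z := Z) (Y := Y) hε⟩

lemma mapDerivedCategory_map_bijective (adj : G ⊣ F) [G.ReflectsIsomorphisms]
    (hcounit : ∀ (K : CochainComplex C ℤ) (J : CochainComplex D ℤ)
      (i : (G.mapHomologicalComplex _).obj K ⟶ J), QuasiIso i → IsBoundedInjectiveModel J →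
      QuasiIso ((mapHomologicalComplexAdjunction adj _).counit.app J))
    (X : DerivedCategory C) {X' : DerivedCategory C} (hX' : boundedObjects C X') :
    Function.Bijective (G.mapDerivedCategory.map : (X ⟶ X') → _) := by
  obtain ⟨K, hK, ⟨e⟩⟩ := hX'
  obtain ⟨J, i, hi, hJ⟩ :=
    (hK.mapHomologicalComplex_obj G).exists_quasiIso_isBoundedInjectiveModel
  have := hJ.isKInjective
  have := hcounit K J i hi hJ
  have := isIso_derivedCounit adj J
  let eJ : Q.obj J ≅ G.mapDerivedCategory.obj X' :=
    (asIso (Q.map i)).symm ≪≫ (G.mapDerivedCategoryFactors.app K).symm ≪≫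
      G.mapDerivedCategory.mapIso e.symm
  exact ((isCouniversalArrow_derivedCounit adj J).comp_iso eJ).map_bijective X

end BoundedDerivedCategory

section CounitSequence

open Limits

variable {C D E ι : Type*} [Category* C] [Category* D] [Category* E] {c : ComplexShape ι}

lemma quasiIso_f_of_acyclic_X₃ [Abelian E] {S : ShortComplex (HomologicalComplex E c)}
    (hS : S.ShortExact) (h₃ : S.X₃.Acyclic) : QuasiIso S.f := by
  have homology_zero (i : ι) : IsZero (S.X₃.homology i) := (h₃ i).isZero_homology
  have := hS.mono_f
  refine ⟨fun j => (quasiIsoAt_iff_isIso_homologyMap _ _).2 ?_⟩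
  have : Epi (HomologicalComplex.homologyMap S.f j) :=
    (hS.homology_exact₂ j).epi_f ((homology_zero j).eq_of_tgt _ _)
  have : Mono (HomologicalComplex.homologyMap S.f j) := by
    by_cases! hj : ∃ i, c.Rel i j
    · obtain ⟨i, hij⟩ := hj
      exact (hS.homology_exact₁ i j hij).mono_g ((homology_zero i).eq_of_src _ _)
    · exact HomologicalComplex.mono_homologyMap_of_mono_of_not_rel S.f j hj
  exact isIso_of_mono_of_epi _

lemma exactAt_mapHomologicalComplex_obj_iff [Abelian C] [Abelian D] (G : C ⥤ D) [G.Additive]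
    [PreservesFiniteLimits G] [PreservesFiniteColimits G] [G.Faithful]
    (K : HomologicalComplex C c) (i : ι) :
    ((G.mapHomologicalComplex c).obj K).ExactAt i ↔ K.ExactAt i :=
  (K.sc i).exact_map_iff_of_faithful G

/-- The complex `U (G (F Y)) ⟶ U Y ⟶ T Y` attached to an adjunction `G ⊣ F` and a natural
transformation `τ : U ⟶ T` whose target `T` vanishes on the image of `G`. For `G` restriction of
scalars along `A ⟶ A ⧸ I`, `U = Hom(A, -)`, `T = Hom(I, -)` and `τ` restriction along `I ⟶ A`, it
is `Hom(A ⧸ I, Y) ⟶ Y ⟶ Hom(I, Y)`. -/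
def counitShortComplex [HasZeroMorphisms E] {G : C ⥤ D} {F : D ⥤ C} (adj : G ⊣ F) {U T : D ⥤ E}
    (τ : U ⟶ T) (hT : ∀ X, IsZero (T.obj (G.obj X))) (Y : D) : ShortComplex E where
  f := U.map (adj.counit.app Y)
  g := τ.app Y
  zero := (τ.naturality _).trans (((hT _).eq_of_tgt (τ.app _) 0).symm ▸ zero_comp)

lemma isZero_mapHomologicalComplex_obj [Preadditive D] [Preadditive E] {T : D ⥤ E} [T.Additive]
    {K : HomologicalComplex D c} (hT : ∀ i, IsZero (T.obj (K.X i))) :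
    IsZero ((T.mapHomologicalComplex c).obj K) := by
  rw [IsZero.iff_id_eq_zero]
  ext i
  exact (hT i).eq_of_src _ _

lemma shortExact_counitShortComplex_mapHomologicalComplex [Preadditive C] [Preadditive D]
    [Abelian E] {G : C ⥤ D} {F : D ⥤ C} [G.Additive] [F.Additive] (adj : G ⊣ F)
    {U T : D ⥤ E} [U.Additive] [T.Additive] (τ : U ⟶ T) (hT : ∀ X, IsZero (T.obj (G.obj X)))
    {J : HomologicalComplex D c} (hJ : ∀ i, (counitShortComplex adj τ hT (J.X i)).ShortExact) :
    (counitShortComplex (mapHomologicalComplexAdjunction adj c)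
      (NatTrans.mapHomologicalComplex τ c)
      (fun _ => isZero_mapHomologicalComplex_obj fun _ => hT _) J).ShortExact :=
  HomologicalComplex.shortExact_of_degreewise_shortExact _ hJ

section Complexes

variable [Abelian C] [Abelian D] [Abelian E] {G : C ⥤ D} {F : D ⥤ C} [G.Additive] [F.Additive]
  (adj : G ⊣ F) {U T : D ⥤ E} [U.Additive] [T.Additive] (τ : U ⟶ T)
  (hT : ∀ X, IsZero (T.obj (G.obj X)))
  [PreservesFiniteLimits U] [PreservesFiniteColimits U] [U.Faithful]
  [PreservesFiniteLimits T] [PreservesFiniteColimits T]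

lemma quasiIso_counit_of_quasiIso {J : HomologicalComplex D c}
    (hJ : ∀ i, (counitShortComplex adj τ hT (J.X i)).ShortExact)
    {K : HomologicalComplex C c} (i : (G.mapHomologicalComplex c).obj K ⟶ J) [QuasiIso i] :
    QuasiIso ((mapHomologicalComplexAdjunction adj c).counit.app J) := by
  have hTJ : ((T.mapHomologicalComplex c).obj J).Acyclic := fun n => by
    rw [← exactAt_iff_of_quasiIsoAt ((T.mapHomologicalComplex c).map i)]
    exact ShortComplex.exact_of_isZero_X₂ _ (hT _)
  have hUJ := quasiIso_f_of_acyclic_X₃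
    (shortExact_counitShortComplex_mapHomologicalComplex adj τ hT hJ) hTJ
  exact (HomologicalComplex.quasiIso_map_iff_of_preservesHomology _ U).1 hUJ

lemma exactAt_rightAdjoint_mapHomologicalComplex_obj [PreservesFiniteLimits G]
    [PreservesFiniteColimits G] [G.Faithful] {J : HomologicalComplex D c}
    (hJ : ∀ i, (counitShortComplex adj τ hT (J.X i)).ShortExact) {j : ι}
    (hj : J.ExactAt j) (hprev : ∀ i, c.Rel i j → J.ExactAt i) :
    ((F.mapHomologicalComplex c).obj J).ExactAt j := by
  rw [← exactAt_mapHomologicalComplex_obj_iff G, ← exactAt_mapHomologicalComplex_obj_iff U]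
  refine (shortExact_counitShortComplex_mapHomologicalComplex adj τ hT hJ).exactAt_X₁ j ?_ ?_
  · have hU : ((U.mapHomologicalComplex c).obj J).ExactAt j := hj.map U
    exact hU.isZero_homology.mono _
  · intro i hij
    have hT : ((T.mapHomologicalComplex c).obj J).ExactAt i := (hprev i hij).map T
    exact hT.isZero_homology.epi _

end Complexes

section Bounded

variable [Abelian C] [Abelian D] [Abelian E] [HasDerivedCategory C] [HasDerivedCategory D]
  [EnoughInjectives D] {G : C ⥤ D} {F : D ⥤ C} [G.Additive] [F.Additive] (adj : G ⊣ F)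
  [PreservesFiniteLimits G] [PreservesFiniteColimits G] [G.Faithful]
  {U T : D ⥤ E} [U.Additive] [PreservesFiniteLimits U] [PreservesFiniteColimits U] [U.Faithful]
  [T.Additive] [PreservesFiniteLimits T] [PreservesFiniteColimits T]
  {τ : U ⟶ T} {hT : ∀ X, IsZero (T.obj (G.obj X))}

lemma mapBoundedDerivedCategory_isLeftAdjoint_of_shortExact
    (hτ : ∀ (J : D) [Injective J], (counitShortComplex adj τ hT J).ShortExact) :
    (mapBoundedDerivedCategory G).IsLeftAdjoint := by
  refine mapBoundedDerivedCategory_isLeftAdjoint adj fun J hJ => ?_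
  obtain ⟨b, _⟩ := hJ.exists_isLE
  have := hJ.injective
  refine ⟨b + 1, (CochainComplex.isLE_iff _ _).2 fun j hj => ?_⟩
  refine exactAt_rightAdjoint_mapHomologicalComplex_obj adj τ hT (fun i => hτ _)
    (J.exactAt_of_isLE b j (by lia)) fun i hij => J.exactAt_of_isLE b i ?_
  have : i + 1 = j := hij
  lia

lemma mapBoundedDerivedCategory_map_bijective_of_shortExact
    (hτ : ∀ (J : D) [Injective J], (counitShortComplex adj τ hT J).ShortExact)
    (X X' : BoundedDerivedCategory C) :
    Function.Bijective ((mapBoundedDerivedCategory G).map : (X ⟶ X') → _) := by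
  have hG := mapDerivedCategory_map_bijective adj (fun K J i _ hJ =>
    have := hJ.injective
    quasiIso_counit_of_quasiIso adj τ hT (fun i => hτ _) i) X.obj X'.property
  exact (ObjectProperty.fullyFaithfulι _).homEquiv.symm.bijective.comp <| hG.comp
    (ObjectProperty.fullyFaithfulι _).homEquiv.bijective

end Bounded

end CounitSequence

section ProjectivePresentation

open Limits Opposite

variable {C D : Type*} [Category* C] [Category* D] [Abelian D]

instance preservesFiniteColimits_preadditiveCoyoneda_obj (P : D) [Projective P] :
    PreservesFiniteColimits (preadditiveCoyoneda.obj (op P)) :=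
  comp_preservesFiniteColimits (preadditiveCoyonedaObj P) (forget₂ _ AddCommGrpCat)

lemma isZero_preadditiveCoyoneda_obj_obj {X Y : D} (h : ∀ g : X ⟶ Y, g = 0) :
    IsZero ((preadditiveCoyoneda.obj (op X)).obj Y) :=
  have : Subsingleton (X ⟶ Y) := ⟨fun g g' => (h g).trans (h g').symm⟩
  AddCommGrpCat.isZero_of_subsingleton (.of (X ⟶ Y))

variable [HasZeroMorphisms C] {G : C ⥤ D} [G.PreservesZeroMorphisms] {F : D ⥤ C} (adj : G ⊣ F)
  {X₀ : C} {I P : D} {i : I ⟶ P} {p : P ⟶ G.obj X₀} {w : i ≫ p = 0}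

lemma eq_zero_of_comp_counit_eq_zero [G.Full] (hS : (ShortComplex.mk i p w).ShortExact)
    (hI : ∀ (X : C) (g : I ⟶ G.obj X), g = 0) {Y : D} {g : P ⟶ G.obj (F.obj Y)}
    (hg : g ≫ adj.counit.app Y = 0) : g = 0 := by
  have : Epi p := hS.epi_g
  obtain ⟨g', rfl : p ≫ g' = g⟩ := hS.exact.desc' g (hI _ _)
  obtain ⟨h, rfl⟩ := G.map_surjective g'
  have hh : G.map h ≫ adj.counit.app Y = 0 :=
    zero_of_epi_comp p ((Category.assoc _ _ _).symm.trans hg)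
  have : h = 0 := (adj.homEquiv _ _).symm.injective (by simp [Adjunction.homEquiv_counit, hh])
  rw [this, G.map_zero, comp_zero]

lemma shortExact_counitShortComplex_preadditiveCoyoneda [G.Full]
    (hS : (ShortComplex.mk i p w).ShortExact)
    (hI : ∀ (X : C) (g : I ⟶ G.obj X), g = 0) (J : D) [Injective J] :
    (counitShortComplex adj (preadditiveCoyoneda.map i.op)
      (fun X => isZero_preadditiveCoyoneda_obj_obj (hI X)) J).ShortExact where
  exact := by
    have : Epi p := hS.epi_g
    rw [ShortComplex.ab_exact_iff]
    intro (g : P ⟶ J) (hg : i ≫ g = 0)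
    obtain ⟨(g' : G.obj X₀ ⟶ J), rfl : p ≫ g' = g⟩ := hS.exact.desc' g hg
    have counit_eq : G.map (adj.homEquiv _ _ g') ≫ adj.counit.app J = g' :=
      (adj.homEquiv_counit _ _ _).symm.trans (Equiv.symm_apply_apply _ _)
    exact ⟨p ≫ G.map (adj.homEquiv _ _ g'),
      (Category.assoc _ _ _).trans (congrArg (p ≫ ·) counit_eq)⟩
  mono_f := by
    rw [AddCommGrpCat.mono_iff_injective, injective_iff_map_eq_zero]
    exact fun g hg => eq_zero_of_comp_counit_eq_zero adj hS hI hg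
  epi_g := by
    have : Mono i := hS.mono_f
    rw [AddCommGrpCat.epi_iff_surjective]
    intro (g : I ⟶ J)
    exact ⟨Injective.factorThru g i, Injective.comp_factorThru g i⟩

end ProjectivePresentation

section RestrictScalarsOfSurjective

lemma linearMap_eq_zero_of_isIdempotentElem {R M : Type*} [Ring R] [AddCommGroup M] [Module R M]
    {I : Ideal R} (hI : IsIdempotentElem I) (hM : ∀ a ∈ I, ∀ m : M, a • m = 0) (g : I →ₗ[R] M) :
    g = 0 := by
  have mul_mem : I * I ≤ (LinearMap.ker g).map I.subtype := Ideal.mul_le.2 fun p hp q hq =>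
    ⟨p • ⟨q, hq⟩, (g.map_smul _ _).trans (hM p hp _), rfl⟩
  ext a
  obtain ⟨b, hb, hba⟩ := mul_mem (hI.ge a.2)
  obtain rfl : b = a := Subtype.ext hba
  exact hb

lemma isSeparator_moduleCat_of_self (R : Type*) [Ring R] : IsSeparator (ModuleCat.of R R) :=
  (isSeparator_def _).2 fun M N g h w => by
    ext m
    simpa using congr($(w (ModuleCat.ofHom (LinearMap.toSpanSingleton R M m))) 1)

variable {R S : Type u} [Ring R] [Ring S] (f : R →+* S)

instance : (ModuleCat.coextendScalars.{u, u, u} f).Additive :=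
  (ModuleCat.restrictCoextendScalarsAdj.{u} f).right_adjoint_additive

/-- The complex `0 ⟶ ker f ⟶ R ⟶ S ⟶ 0` of `R`-modules attached to a ring morphism
`f : R →+* S`. -/
noncomputable abbrev kerShortComplex : ShortComplex (ModuleCat.{u} R) :=
  .mk (ModuleCat.ofHom (RingHom.ker f).subtype)
    (ModuleCat.ofHom (Y := (ModuleCat.restrictScalars.{u} f).obj (.of S S))
      { toFun := f, map_add' := map_add f, map_smul' := map_mul f })
    (by ext a; exact a.2)

variable {f}

lemma full_restrictScalars (hf : Function.Surjective f) :
    (ModuleCat.restrictScalars.{u} f).Full where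
  map_surjective {M N} g :=
    ⟨ModuleCat.ofHom (X := M) (Y := N)
      { toFun := g
        map_add' := map_add g.hom
        map_smul' := hf.forall.2 (map_smul g.hom) }, rfl⟩

lemma shortExact_kerShortComplex (hf : Function.Surjective f) : (kerShortComplex f).ShortExact where
  exact := (ShortComplex.moduleCat_exact_iff _).2 fun a ha => ⟨⟨a, ha⟩, rfl⟩
  mono_f := (ModuleCat.mono_iff_injective _).2 Subtype.val_injective
  epi_g := (ModuleCat.epi_iff_surjective _).2 hf

lemma ker_hom_restrictScalars_eq_zero (hker : IsIdempotentElem (RingHom.ker f))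
    (M : ModuleCat.{u} S)
    (g : ModuleCat.of R (RingHom.ker f) ⟶ (ModuleCat.restrictScalars.{u} f).obj M) : g = 0 := by
  ext1
  refine linearMap_eq_zero_of_isIdempotentElem hker (fun a ha m => ?_) g.hom
  rw [ModuleCat.restrictScalars.smul_def, RingHom.mem_ker.1 ha, zero_smul]
  rfl

lemma shortExact_counitShortComplex_restrictScalars (hf : Function.Surjective f)
    (hker : IsIdempotentElem (RingHom.ker f)) (J : ModuleCat.{u} R) [Injective J] :
    (counitShortComplex (ModuleCat.restrictCoextendScalarsAdj.{u} f)
      (preadditiveCoyoneda.map (ModuleCat.ofHom (RingHom.ker f).subtype).op)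
      (fun M => isZero_preadditiveCoyoneda_obj_obj (ker_hom_restrictScalars_eq_zero hker M))
      J).ShortExact :=
  have := full_restrictScalars hf
  shortExact_counitShortComplex_preadditiveCoyoneda (X₀ := .of S S) _
    (shortExact_kerShortComplex hf) (ker_hom_restrictScalars_eq_zero hker) J

variable [Module.Projective R (RingHom.ker f)]

lemma mapBoundedDerivedCategory_restrictScalars_isLeftAdjoint (hf : Function.Surjective f)
    (hker : IsIdempotentElem (RingHom.ker f)) :
    (mapBoundedDerivedCategory (ModuleCat.restrictScalars.{u} f)).IsLeftAdjoint := by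
  have := (isSeparator_iff_faithful_preadditiveCoyoneda _).1 (isSeparator_moduleCat_of_self R)
  exact mapBoundedDerivedCategory_isLeftAdjoint_of_shortExact _
    (shortExact_counitShortComplex_restrictScalars hf hker)

lemma mapBoundedDerivedCategory_restrictScalars_map_bijective (hf : Function.Surjective f)
    (hker : IsIdempotentElem (RingHom.ker f))
    (X Y : BoundedDerivedCategory (ModuleCat.{u} S)) :
    Function.Bijective
      ((mapBoundedDerivedCategory (ModuleCat.restrictScalars.{u} f)).map : (X ⟶ Y) → _) := by
  have := (isSeparator_iff_faithful_preadditiveCoyoneda _).1 (isSeparator_moduleCat_of_self R)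
  exact mapBoundedDerivedCategory_map_bijective_of_shortExact _
    (shortExact_counitShortComplex_restrictScalars hf hker) X Y

end RestrictScalarsOfSurjective

section QuotByIdeal

variable {A : Type u} [Ring A] {I : Ideal A}

lemma quotByIdealProj_surjective : Function.Surjective (quotByIdealProj A I) :=
  RingQuot.mkRingHom_surjective _

lemma ker_quotByIdealProj [I.IsTwoSided] : RingHom.ker (quotByIdealProj A I) = I := by
  refine le_antisymm (fun a ha => ?_) fun a ha => ?_
  · let φ : QuotByIdeal A I →+* A ⧸ I := RingQuot.lift
      ⟨Ideal.Quotient.mk I, fun x y h => by simpa [h.2] using Ideal.Quotient.eq_zero_iff_mem.2 h.1⟩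
    have hφ : φ (quotByIdealProj A I a) = Ideal.Quotient.mk I a :=
      RingQuot.lift_mkRingHom_apply _ _ _
    rw [← Ideal.Quotient.eq_zero_iff_mem, ← hφ, RingHom.mem_ker.1 ha, map_zero]
  · have : quotByIdealProj A I a = quotByIdealProj A I 0 := RingQuot.mkRingHom_rel ⟨ha, rfl⟩
    rwa [map_zero] at this

lemma isIdempotentElem_of_span_mul_eq
    (h : Submodule.span A {z : A | ∃ p ∈ I, ∃ q ∈ I, z = p * q} = I) : IsIdempotentElem I := by
  refine le_antisymm (Ideal.mul_le.2 fun p _ q hq => I.mul_mem_left p hq) ?_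
  conv_lhs => rw [← h]
  exact Submodule.span_le.2 fun z ⟨p, hp, q, hq, hz⟩ => hz ▸ Ideal.mul_mem_mul hp hq

end QuotByIdeal

/-- **Full embedding with right adjoint.**  Let `A` be a ring, `I` a two-sided
idempotent ideal which is projective as a left `A`-module, and `B := A / I`.
Then the functor `i_* : D^b(B) → D^b(A)` induced by restriction of scalars
along `A → B` is fully faithful and admits a right adjoint `i^!` such that
`i^! ∘ i_*` is naturally isomorphic to the identity functor of `D^b(B)`. -/
theorem bounded_derived_full_embedding (A : Type u) [Ring A] (I : Ideal A)
    (htwosided : ∀ x ∈ I, ∀ a : A, x * a ∈ I)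
    (hidem : Submodule.span A {z : A | ∃ p ∈ I, ∃ q ∈ I, z = p * q} = I)
    (hproj : Module.Projective A ↥I) :
    ∃ ist : BoundedDerivedCategory (ModuleCat.{u} (QuotByIdeal A I)) ⥤
        BoundedDerivedCategory (ModuleCat.{u} A),
      -- `ist` is induced by the restriction of scalars functor
      Nonempty ((ist ⋙ boundedInclusion (ModuleCat.{u} A)) ≅
        (boundedInclusion (ModuleCat.{u} (QuotByIdeal A I)) ⋙
          (ModuleCat.restrictScalars (quotByIdealProj A I)).mapDerivedCategory)) ∧
      -- `ist` is a full embedding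
      ist.Full ∧ ist.Faithful ∧
      -- `ist` admits a right adjoint `i^!` with `i^! ∘ i_* ≅ id`
      ∃ (ishriek : BoundedDerivedCategory (ModuleCat.{u} A) ⥤
          BoundedDerivedCategory (ModuleCat.{u} (QuotByIdeal A I)))
        (_ : ist ⊣ ishriek),
        Nonempty ((ist ⋙ ishriek) ≅ 𝟭 _) := by
  have : I.IsTwoSided := ⟨fun b ha => htwosided _ ha b⟩
  have hker : RingHom.ker (quotByIdealProj A I) = I := ker_quotByIdealProj
  have hsurj : Function.Surjective (quotByIdealProj A I) := quotByIdealProj_surjective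
  have hker_idem : IsIdempotentElem (RingHom.ker (quotByIdealProj A I)) :=
    hker.symm ▸ isIdempotentElem_of_span_mul_eq hidem
  have : Module.Projective A (RingHom.ker (quotByIdealProj A I)) := hker.symm ▸ hproj
  let ist := mapBoundedDerivedCategory (ModuleCat.restrictScalars.{u} (quotByIdealProj A I))
  have hmap := mapBoundedDerivedCategory_restrictScalars_map_bijective hsurj hker_idem
  have full : ist.Full := ⟨(hmap _ _).surjective⟩
  have faithful : ist.Faithful := ⟨fun h => (hmap _ _).injective h⟩
  have := mapBoundedDerivedCategory_restrictScalars_isLeftAdjoint hsurj hker_idem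
  let adj : ist ⊣ ist.rightAdjoint := Adjunction.ofIsLeftAdjoint ist
  exact ⟨ist, ⟨mapBoundedDerivedCategoryCompInclusionIso _⟩, full, faithful, ist.rightAdjoint,
    adj, ⟨(asIso adj.unit).symm⟩⟩
end

section
/- One has the following K-module decompositions inside A: e·A·e is the free K-module with basis {e, b, b²}, e·A·f is the free K-module with basis {c}, f·A·e is the free K-module with basis {a}, and f·A·f is the free K-module with basis {f}. -/
universe u

open CategoryTheory

/-- The five generators of the quiver algebra: two vertices `e`, `f`, arrows
`a : e → f`, `c : f → e` and a loop `b` at `e`. -/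
inductive QGen : Type
  | e | f | a | b | c

/-- The defining relations of the quiver algebra. -/
inductive qRel (K : Type u) [CommRing K] (z : K) :
    FreeAlgebra K QGen → FreeAlgebra K QGen → Prop
  | idem_e : qRel K z (FreeAlgebra.ι K QGen.e * FreeAlgebra.ι K QGen.e)
      (FreeAlgebra.ι K QGen.e)
  | idem_f : qRel K z (FreeAlgebra.ι K QGen.f * FreeAlgebra.ι K QGen.f)
      (FreeAlgebra.ι K QGen.f)
  | ef : qRel K z (FreeAlgebra.ι K QGen.e * FreeAlgebra.ι K QGen.f) 0
  | fe : qRel K z (FreeAlgebra.ι K QGen.f * FreeAlgebra.ι K QGen.e) 0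
  | sum : qRel K z (FreeAlgebra.ι K QGen.e + FreeAlgebra.ι K QGen.f) 1
  | a_sandwich : qRel K z (FreeAlgebra.ι K QGen.a)
      (FreeAlgebra.ι K QGen.f * FreeAlgebra.ι K QGen.a * FreeAlgebra.ι K QGen.e)
  | c_sandwich : qRel K z (FreeAlgebra.ι K QGen.c)
      (FreeAlgebra.ι K QGen.e * FreeAlgebra.ι K QGen.c * FreeAlgebra.ι K QGen.f)
  | b_sandwich : qRel K z (FreeAlgebra.ι K QGen.b)
      (FreeAlgebra.ι K QGen.e * FreeAlgebra.ι K QGen.b * FreeAlgebra.ι K QGen.e)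
  | ab : qRel K z (FreeAlgebra.ι K QGen.a * FreeAlgebra.ι K QGen.b) 0
  | bc : qRel K z (FreeAlgebra.ι K QGen.b * FreeAlgebra.ι K QGen.c) 0
  | ac : qRel K z (FreeAlgebra.ι K QGen.a * FreeAlgebra.ι K QGen.c)
      (z • FreeAlgebra.ι K QGen.f)
  | bb_ca : qRel K z (FreeAlgebra.ι K QGen.b * FreeAlgebra.ι K QGen.b +
      FreeAlgebra.ι K QGen.c * FreeAlgebra.ι K QGen.a)
      (z • FreeAlgebra.ι K QGen.e)

/-- The quiver algebra `A` of the example: the path algebra of the quiver with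
vertices `e`, `f`, arrows `a : e → f`, `c : f → e` and loop `b` at `e`, modulo
the relations `0 = ab = bc = ac - z·f = b² + ca - z·e`. -/
def QuiverAlg (K : Type u) [CommRing K] (z : K) : Type u :=
  RingQuot (qRel K z)

noncomputable instance (K : Type u) [CommRing K] (z : K) : Ring (QuiverAlg K z) :=
  inferInstanceAs (Ring (RingQuot _))

noncomputable instance (K : Type u) [CommRing K] (z : K) : Algebra K (QuiverAlg K z) :=
  inferInstanceAs (Algebra K (RingQuot _))

/-- The images of the five generators in the quiver algebra. -/
noncomputable def gen (K : Type u) [CommRing K] (z : K) (g : QGen) : QuiverAlg K z :=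
  RingQuot.mkAlgHom K (qRel K z) (FreeAlgebra.ι K g)

/-- The `K`-linear "sandwich" map `x ↦ u * x * v` on the quiver algebra. -/
noncomputable def sandwich (K : Type u) [CommRing K] (z : K) (u v : QuiverAlg K z) :
    QuiverAlg K z →ₗ[K] QuiverAlg K z :=
  (LinearMap.mulLeft K u).comp (LinearMap.mulRight K v)

/-!
The twelve relations reduce every product of generators to a combination of the six paths
`e`, `f`, `a`, `b`, `c`, `b²`; the only reduction that is not immediate is `b³ = z b`, which comes
from `0 = (b c) a = b (z e - b²)`. So the six paths span `A`. They are independent because left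
multiplication on `A e` can be written down as explicit `4 × 4` matrices, in which each path has an
entry that no other path has. Each path starts and ends at a vertex, so `x ↦ u x v` fixes the
paths from `v` to `u` and kills the others.
-/

section LinearAlgebra

variable {R M ι : Type*} [Semiring R] [AddCommMonoid M] [Module R M]

theorem range_eq_span_image_of_fixes_of_kills {φ : M →ₗ[R] M} {v : ι → M} {s : Set ι}
    (hv : Submodule.span R (Set.range v) = ⊤) (hfix : ∀ i ∈ s, φ (v i) = v i)
    (hkill : ∀ i ∉ s, φ (v i) = 0) :
    LinearMap.range φ = Submodule.span R (v '' s) := by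
  apply le_antisymm
  · rw [LinearMap.range_eq_map, ← hv, Submodule.map_span, Submodule.span_le]
    rintro _ ⟨_, ⟨i, rfl⟩, rfl⟩
    by_cases hi : i ∈ s
    · rw [hfix i hi]
      exact Submodule.subset_span (Set.mem_image_of_mem v hi)
    · rw [hkill i hi]
      exact Submodule.zero_mem _
  · rw [Submodule.span_le]
    rintro _ ⟨i, hi, rfl⟩
    exact ⟨v i, hfix i hi⟩

end LinearAlgebra

theorem submodule_eq_top_of_adjoin_eq_top {R A : Type*} [CommSemiring R] [Semiring A]
    [Algebra R A] {s : Set A} {W : Submodule R A} (hs : Algebra.adjoin R s = ⊤) (hone : 1 ∈ W)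
    (hmul : ∀ g ∈ s, ∀ w ∈ W, g * w ∈ W) : W = ⊤ := by
  rw [eq_top_iff]
  rintro x -
  suffices h : ∀ w ∈ W, x * w ∈ W by simpa using h 1 hone
  have hx : x ∈ Algebra.adjoin R s := hs ▸ Algebra.mem_top
  induction hx using Algebra.adjoin_induction with
  | mem g hg => exact hmul g hg
  | algebraMap r => exact fun w hw ↦ Algebra.smul_def r w ▸ W.smul_mem r hw
  | add x y _ _ hx hy => exact fun w hw ↦ add_mul x y w ▸ W.add_mem (hx w hw) (hy w hw)
  | mul x y _ _ hx hy => exact fun w hw ↦ mul_assoc x y w ▸ hx _ (hy w hw)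

/-- `x` lies in the Peirce component `u R v`. For idempotents `u` and `v` this is the same as
being of the form `u * y * v`. -/
structure IsPeirce {R : Type*} [Mul R] (u v x : R) : Prop where
  left : u * x = x
  right : x * v = x

namespace IsPeirce

theorem of_eq_mul {R : Type*} [Semigroup R] {u v x : R} (hu : IsIdempotentElem u)
    (hv : IsIdempotentElem v) (hx : x = u * x * v) : IsPeirce u v x where
  left := by rw [hx, ← mul_assoc, ← mul_assoc, hu.eq]
  right := by rw [hx, mul_assoc, hv.eq]

theorem mul {R : Type*} [Semigroup R] {u v v' w x y : R} (hx : IsPeirce u v x)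
    (hy : IsPeirce v' w y) : IsPeirce u w (x * y) where
  left := by rw [← mul_assoc, hx.left]
  right := by rw [mul_assoc, hy.right]

theorem mul_eq_zero {R : Type*} [SemigroupWithZero R] {u v v' w x y : R} (hx : IsPeirce u v x)
    (hy : IsPeirce v' w y) (h : v * v' = 0) : x * y = 0 := by
  rw [← hx.right, ← hy.left, mul_assoc, ← mul_assoc v, h, zero_mul, mul_zero]

end IsPeirce

/-- The two vertices of the quiver. -/
inductive QVertex : Type
  | e | f

/-- The vertex at which a generator starts; a vertex idempotent is a path of length zero. -/
def QGen.source : QGen → QVertex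
  | .e | .a | .b => .e
  | .f | .c => .f

/-- The vertex at which a generator ends; a vertex idempotent is a path of length zero. -/
def QGen.target : QGen → QVertex
  | .e | .b | .c => .e
  | .f | .a => .f

/-- The index set of the basis of the quiver algebra: the generators and the path `b²`. -/
inductive NormalPath : Type
  | ofGen (g : QGen)
  | bSq

namespace NormalPath

/-- The vertex at which a basis path starts. -/
def source : NormalPath → QVertex
  | ofGen g => g.source
  | bSq => .e

/-- The vertex at which a basis path ends. -/
def target : NormalPath → QVertex
  | ofGen g => g.target
  | bSq => .e

end NormalPath

namespace QuiverAlg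

variable (K : Type u) [CommRing K] (z : K)

/-- The quotient map from the free algebra on the generators. -/
noncomputable def mk : FreeAlgebra K QGen →ₐ[K] QuiverAlg K z :=
  RingQuot.mkAlgHom K (qRel K z)

theorem mk_ι (g : QGen) : mk K z (FreeAlgebra.ι K g) = gen K z g := rfl

theorem mk_surjective : Function.Surjective (mk K z) :=
  RingQuot.mkAlgHom_surjective K (qRel K z)

theorem mk_eq_mk_of_qRel {x y : FreeAlgebra K QGen} (h : qRel K z x y) : mk K z x = mk K z y :=
  RingQuot.mkAlgHom_rel K h

theorem adjoin_range_gen : Algebra.adjoin K (Set.range (gen K z)) = ⊤ := by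
  have hgen : gen K z = mk K z ∘ FreeAlgebra.ι K := rfl
  rw [hgen, Set.range_comp, ← AlgHom.map_adjoin, FreeAlgebra.adjoin_range_ι, Algebra.map_top,
    AlgHom.range_eq_top]
  exact mk_surjective K z

/-- The idempotent of the quiver algebra attached to a vertex. -/
noncomputable def vertex : QVertex → QuiverAlg K z
  | .e => gen K z .e
  | .f => gen K z .f

theorem orthogonalIdempotents_vertex : OrthogonalIdempotents (vertex K z) where
  idem
    | .e => by simpa [mk_ι] using! mk_eq_mk_of_qRel K z .idem_e
    | .f => by simpa [mk_ι] using! mk_eq_mk_of_qRel K z .idem_f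
  ortho
    | .e, .e, h | .f, .f, h => (h rfl).elim
    | .e, .f, _ => by simpa [mk_ι] using! mk_eq_mk_of_qRel K z .ef
    | .f, .e, _ => by simpa [mk_ι] using! mk_eq_mk_of_qRel K z .fe

theorem gen_e_add_gen_f : gen K z .e + gen K z .f = 1 := by
  simpa [mk_ι] using mk_eq_mk_of_qRel K z .sum

theorem gen_a_mul_gen_b : gen K z .a * gen K z .b = 0 := by
  simpa [mk_ι] using mk_eq_mk_of_qRel K z .ab

theorem gen_b_mul_gen_c : gen K z .b * gen K z .c = 0 := by
  simpa [mk_ι] using mk_eq_mk_of_qRel K z .bc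

theorem gen_a_mul_gen_c : gen K z .a * gen K z .c = z • gen K z .f := by
  simpa [mk_ι] using mk_eq_mk_of_qRel K z .ac

theorem gen_c_mul_gen_a :
    gen K z .c * gen K z .a = z • gen K z .e - gen K z .b * gen K z .b := by
  rw [eq_sub_iff_add_eq']
  simpa [mk_ι] using mk_eq_mk_of_qRel K z .bb_ca

theorem isPeirce_gen (g : QGen) :
    IsPeirce (vertex K z g.target) (vertex K z g.source) (gen K z g) := by
  have hidem := (orthogonalIdempotents_vertex K z).idem
  cases g
  case e => exact ⟨hidem .e, hidem .e⟩
  case f => exact ⟨hidem .f, hidem .f⟩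
  case a =>
    apply IsPeirce.of_eq_mul (hidem .f) (hidem .e)
    simpa [mk_ι] using! mk_eq_mk_of_qRel K z .a_sandwich
  case b =>
    apply IsPeirce.of_eq_mul (hidem .e) (hidem .e)
    simpa [mk_ι] using! mk_eq_mk_of_qRel K z .b_sandwich
  case c =>
    apply IsPeirce.of_eq_mul (hidem .e) (hidem .f)
    simpa [mk_ι] using! mk_eq_mk_of_qRel K z .c_sandwich

theorem gen_mul_gen_of_source_ne_target {g h : QGen} (hgh : g.source ≠ h.target) :
    gen K z g * gen K z h = 0 :=
  (isPeirce_gen K z g).mul_eq_zero (isPeirce_gen K z h)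
    ((orthogonalIdempotents_vertex K z).ortho hgh)

theorem gen_b_mul_gen_b_mul_gen_b : gen K z .b * gen K z .b * gen K z .b = z • gen K z .b := by
  have hbca : gen K z .b * (gen K z .c * gen K z .a) = 0 := by
    rw [← mul_assoc, gen_b_mul_gen_c, zero_mul]
  have hbe : gen K z .b * gen K z .e = gen K z .b := (isPeirce_gen K z .b).right
  rw [gen_c_mul_gen_a, mul_sub, mul_smul_comm, hbe, ← mul_assoc, sub_eq_zero] at hbca
  exact hbca.symm

/-- The element of the quiver algebra given by a basis path. -/
noncomputable def path : NormalPath → QuiverAlg K z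
  | .ofGen g => gen K z g
  | .bSq => gen K z .b * gen K z .b

theorem isPeirce_path : ∀ p : NormalPath,
    IsPeirce (vertex K z p.target) (vertex K z p.source) (path K z p)
  | .ofGen g => isPeirce_gen K z g
  | .bSq => (isPeirce_gen K z .b).mul (isPeirce_gen K z .b)

theorem path_mem_span (p : NormalPath) : path K z p ∈ Submodule.span K (Set.range (path K z)) :=
  Submodule.subset_span (Set.mem_range_self p)

theorem gen_mul_gen_mem_span_path (g h : QGen) :
    gen K z g * gen K z h ∈ Submodule.span K (Set.range (path K z)) := by
  have hmem := path_mem_span K z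
  have hleft : vertex K z h.target * gen K z h = gen K z h := (isPeirce_gen K z h).left
  have hright : gen K z g * vertex K z g.source = gen K z g := (isPeirce_gen K z g).right
  by_cases hgh : g.source = h.target
  · cases g <;> cases h <;> try contradiction
    case e.e | e.b | e.c | f.f | f.a => exact hleft.symm ▸ hmem (.ofGen _)
    case a.e | b.e | c.f => exact hright.symm ▸ hmem (.ofGen _)
    case a.b => exact gen_a_mul_gen_b K z ▸ Submodule.zero_mem _
    case b.c => exact gen_b_mul_gen_c K z ▸ Submodule.zero_mem _
    case b.b => exact hmem .bSq
    case a.c => exact gen_a_mul_gen_c K z ▸ Submodule.smul_mem _ z (hmem (.ofGen .f))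
    case c.a =>
      rw [gen_c_mul_gen_a]
      exact Submodule.sub_mem _ (Submodule.smul_mem _ z (hmem (.ofGen .e))) (hmem .bSq)
  · exact gen_mul_gen_of_source_ne_target K z hgh ▸ Submodule.zero_mem _

theorem gen_mul_path_mem_span_path (g : QGen) :
    ∀ p : NormalPath, gen K z g * path K z p ∈ Submodule.span K (Set.range (path K z))
  | .ofGen h => gen_mul_gen_mem_span_path K z g h
  | .bSq => by
    have hmem := path_mem_span K z
    have heb : gen K z .e * gen K z .b = gen K z .b := (isPeirce_gen K z .b).left
    rw [path, ← mul_assoc]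
    cases g
    case e => exact heb.symm ▸ hmem .bSq
    case a => simp [gen_a_mul_gen_b]
    case b => exact gen_b_mul_gen_b_mul_gen_b K z ▸ Submodule.smul_mem _ z (hmem (.ofGen .b))
    case f | c =>
      rw [gen_mul_gen_of_source_ne_target K z (h := .b) (by nofun), zero_mul]
      exact Submodule.zero_mem _

theorem span_range_path : Submodule.span K (Set.range (path K z)) = ⊤ := by
  apply submodule_eq_top_of_adjoin_eq_top (adjoin_range_gen K z)
  · rw [← gen_e_add_gen_f]
    exact Submodule.add_mem _ (path_mem_span K z (.ofGen .e)) (path_mem_span K z (.ofGen .f))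
  · rintro _ ⟨g, rfl⟩ w hw
    induction hw using Submodule.span_induction with
    | mem _ hp =>
      obtain ⟨p, rfl⟩ := hp
      exact gen_mul_path_mem_span_path K z g p
    | zero => exact (mul_zero (gen K z g)).symm ▸ Submodule.zero_mem _
    | add x y _ _ hx hy => exact mul_add (gen K z g) x y ▸ Submodule.add_mem _ hx hy
    | smul k x _ hx => exact mul_smul_comm k (gen K z g) x ▸ Submodule.smul_mem _ k hx

/-- The matrix of left multiplication by a generator on the left ideal `A e`, in the basis
`e`, `b`, `b²`, `a`. -/
def leftMulMatrix : QGen → Matrix (Fin 4) (Fin 4) K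
  | .e => !![1, 0, 0, 0; 0, 1, 0, 0; 0, 0, 1, 0; 0, 0, 0, 0]
  | .f => !![0, 0, 0, 0; 0, 0, 0, 0; 0, 0, 0, 0; 0, 0, 0, 1]
  | .a => !![0, 0, 0, 0; 0, 0, 0, 0; 0, 0, 0, 0; 1, 0, 0, 0]
  | .b => !![0, 0, 0, 0; 1, 0, z, 0; 0, 1, 0, 0; 0, 0, 0, 0]
  | .c => !![0, 0, 0, z; 0, 0, 0, 0; 0, 0, 0, -1; 0, 0, 0, 0]

theorem lift_leftMulMatrix_eq_of_qRel {x y : FreeAlgebra K QGen} (h : qRel K z x y) :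
    FreeAlgebra.lift K (leftMulMatrix K z) x = FreeAlgebra.lift K (leftMulMatrix K z) y := by
  cases h <;>
    simp [leftMulMatrix, ← Matrix.ext_iff, funext_iff, Fin.forall_fin_succ]

/-- The representation of the quiver algebra by left multiplication on the left ideal `A e`. -/
noncomputable def leftMulRep : QuiverAlg K z →ₐ[K] Matrix (Fin 4) (Fin 4) K :=
  RingQuot.liftAlgHom K
    ⟨FreeAlgebra.lift K (leftMulMatrix K z), fun _ _ ↦ lift_leftMulMatrix_eq_of_qRel K z⟩

theorem leftMulRep_gen (g : QGen) : leftMulRep K z (gen K z g) = leftMulMatrix K z g :=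
  (RingQuot.liftAlgHom_mkAlgHom_apply ..).trans (FreeAlgebra.lift_ι_apply ..)

/-- The coordinate functionals dual to the basis paths. They are entries of the matrix of left
multiplication on `A e`: the column of `e` shows the paths starting at `e`, and the column of `a`
those starting at `f`, where `c a = z e - b²` gives the sign. -/
noncomputable def pathCoord : NormalPath → Module.Dual K (QuiverAlg K z)
  | .ofGen .e => Matrix.entryLinearMap K K 0 0 ∘ₗ (leftMulRep K z).toLinearMap
  | .ofGen .b => Matrix.entryLinearMap K K 1 0 ∘ₗ (leftMulRep K z).toLinearMap
  | .bSq => Matrix.entryLinearMap K K 2 0 ∘ₗ (leftMulRep K z).toLinearMap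
  | .ofGen .a => Matrix.entryLinearMap K K 3 0 ∘ₗ (leftMulRep K z).toLinearMap
  | .ofGen .c => -(Matrix.entryLinearMap K K 2 3 ∘ₗ (leftMulRep K z).toLinearMap)
  | .ofGen .f => Matrix.entryLinearMap K K 3 3 ∘ₗ (leftMulRep K z).toLinearMap

theorem pathCoord_path_of_ne {p q : NormalPath} (hpq : p ≠ q) :
    pathCoord K z p (path K z q) = 0 := by
  rcases p with (_ | _ | _ | _ | _) | _ <;> rcases q with (_ | _ | _ | _ | _) | _ <;>
    first
    | exact absurd rfl hpq
    | simp [pathCoord, path, leftMulRep_gen, leftMulMatrix]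

theorem pathCoord_path_self (p : NormalPath) : pathCoord K z p (path K z p) = 1 := by
  rcases p with (_ | _ | _ | _ | _) | _ <;>
    simp [pathCoord, path, leftMulRep_gen, leftMulMatrix]

theorem linearIndependent_path : LinearIndependent K (path K z) :=
  .of_pairwise_dual_eq_zero_one _ (pathCoord K z) (fun _ _ ↦ pathCoord_path_of_ne K z)
    (pathCoord_path_self K z)

theorem range_sandwich_vertex (u v : QVertex) :
    LinearMap.range (sandwich K z (vertex K z u) (vertex K z v)) =
      Submodule.span K (path K z '' {p | p.target = u ∧ p.source = v}) := by
  have hortho := (orthogonalIdempotents_vertex K z).ortho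
  have happly (x : QuiverAlg K z) :
      sandwich K z (vertex K z u) (vertex K z v) x = vertex K z u * (x * vertex K z v) := rfl
  apply range_eq_span_image_of_fixes_of_kills (span_range_path K z)
  · rintro p ⟨rfl, rfl⟩
    rw [happly, (isPeirce_path K z p).right, (isPeirce_path K z p).left]
  · intro p hp
    rw [happly]
    by_cases hu : p.target = u
    · have hv : p.source ≠ v := fun hv ↦ hp ⟨hu, hv⟩
      rw [← (isPeirce_path K z p).right, mul_assoc, hortho hv, mul_zero, mul_zero]
    · rw [← (isPeirce_path K z p).left, ← mul_assoc, ← mul_assoc, hortho (Ne.symm hu), zero_mul,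
        zero_mul]

theorem peirce_vertex_e_vertex_e :
    LinearMap.range (sandwich K z (vertex K z .e) (vertex K z .e)) =
        Submodule.span K {gen K z .e, gen K z .b, gen K z .b * gen K z .b} ∧
      LinearIndependent K ![gen K z .e, gen K z .b, gen K z .b * gen K z .b] := by
  have hloops : {p : NormalPath | p.target = .e ∧ p.source = .e} =
      {.ofGen .e, .ofGen .b, .bSq} := by
    ext p
    rcases p with (_ | _ | _ | _ | _) | _ <;>
      simp [NormalPath.source, NormalPath.target, QGen.source, QGen.target]
  have hinj : Function.Injective ![NormalPath.ofGen .e, .ofGen .b, .bSq] := by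
    simp [Function.Injective, Fin.forall_fin_succ]
  have hpath : path K z ∘ ![.ofGen .e, .ofGen .b, .bSq] =
      ![gen K z .e, gen K z .b, gen K z .b * gen K z .b] := by
    ext i
    fin_cases i <;> rfl
  constructor
  · rw [range_sandwich_vertex, hloops, Set.image_insert_eq, Set.image_insert_eq,
      Set.image_singleton]
    rfl
  · exact hpath ▸ (linearIndependent_path K z).comp _ hinj

theorem peirce_of_unique_path {p : NormalPath}
    (hp : ∀ q : NormalPath, q.target = p.target → q.source = p.source → q = p) :
    LinearMap.range (sandwich K z (vertex K z p.target) (vertex K z p.source)) =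
        Submodule.span K {path K z p} ∧
      LinearIndependent K ![path K z p] := by
  have hset : {q : NormalPath | q.target = p.target ∧ q.source = p.source} = {p} :=
    Set.eq_singleton_iff_unique_mem.mpr ⟨⟨rfl, rfl⟩, fun q hq ↦ hp q hq.1 hq.2⟩
  have hpath : path K z ∘ ![p] = ![path K z p] := by
    ext i
    fin_cases i
    rfl
  constructor
  · rw [range_sandwich_vertex, hset, Set.image_singleton]
  · exact hpath ▸ (linearIndependent_path K z).comp _ (Function.injective_of_subsingleton ![p])

end QuiverAlg

/-- **Peirce decomposition of the quiver algebra.**  `e·A·e` is the free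
`K`-module with basis `{e, b, b²}`, `e·A·f` is free with basis `{c}`,
`f·A·e` is free with basis `{a}` and `f·A·f` is free with basis `{f}`. -/
theorem quiverAlg_peirce (K : Type u) [CommRing K] (z : K) :
    (LinearMap.range (sandwich K z (gen K z QGen.e) (gen K z QGen.e)) =
        Submodule.span K {gen K z QGen.e, gen K z QGen.b,
          gen K z QGen.b * gen K z QGen.b} ∧
      LinearIndependent K
        ![gen K z QGen.e, gen K z QGen.b, gen K z QGen.b * gen K z QGen.b]) ∧
    (LinearMap.range (sandwich K z (gen K z QGen.e) (gen K z QGen.f)) =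
        Submodule.span K {gen K z QGen.c} ∧
      LinearIndependent K ![gen K z QGen.c]) ∧
    (LinearMap.range (sandwich K z (gen K z QGen.f) (gen K z QGen.e)) =
        Submodule.span K {gen K z QGen.a} ∧
      LinearIndependent K ![gen K z QGen.a]) ∧
    (LinearMap.range (sandwich K z (gen K z QGen.f) (gen K z QGen.f)) =
        Submodule.span K {gen K z QGen.f} ∧
      LinearIndependent K ![gen K z QGen.f]) := by
  refine ⟨QuiverAlg.peirce_vertex_e_vertex_e K z,
    QuiverAlg.peirce_of_unique_path K z (p := .ofGen .c) ?_,
    QuiverAlg.peirce_of_unique_path K z (p := .ofGen .a) ?_,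
    QuiverAlg.peirce_of_unique_path K z (p := .ofGen .f) ?_⟩ <;>
  · intro q htarget hsource
    rcases q with (_ | _ | _ | _ | _) | _ <;> first | rfl | contradiction
end
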